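/- The group $GL_4(\mathbb{F}_2)$ (which equals $PSL_4(\mathbb{F}_2)$) is isomorphic as a group to the alternating group $A_8$ on eight elements. -/

import Mathlib

/-!
`GL₄(𝔽₂)` acts on alternating `4 × 4` matrices by congruence `A ↦ g A gᵀ`. Of the `63` nonzero
alternating matrices exactly `28 = (8 choose 2)` are invertible, and a Kerdock set, a family
`K 0, …, K 7` of alternating matrices whose pairwise sums are all invertible, labels them by the
two-element subsets `{i, j}` of `Fin 8` through `K i + K j`. Congruence by any `g` permutes
these `28` matrices as some permutation `σ` of the eight labels does (`Induces g σ`):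

* such a `σ` is unique (`Induces.unique`), because `i` is the common element of `{i, j}`
  and `{i, k}`;
* it exists for every `g` (`exists_induces`), because it does for the twelve transvections,
  which generate `GL₄(𝔽₂)`;
* only `g = 1` induces the identity (`eq_one_of_induces_one`): such a `g` fixes each `K i`, hence
  commutes with each `K i * K 1`, and these matrices generate the full matrix algebra, so `g` is
  a scalar.

This gives an injective homomorphism `GL₄(𝔽₂) → S₈`. Since `|GL₄(𝔽₂)| = 20160 = 8! / 2`, its image
has index two in `S₈`, and the alternating group is the only subgroup of index two.
-/

open Matrix

namespace GL42

/-- A Kerdock set: eight alternating `4 × 4` matrices over `𝔽₂` whose pairwise sums are the `28`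
invertible alternating matrices. -/
def K : Fin 8 → Matrix (Fin 4) (Fin 4) (ZMod 2) :=
  ![!![0, 0, 0, 0; 0, 0, 0, 0; 0, 0, 0, 0; 0, 0, 0, 0],
    !![0, 0, 0, 1; 0, 0, 1, 0; 0, 1, 0, 0; 1, 0, 0, 0],
    !![0, 0, 1, 0; 0, 0, 1, 1; 1, 1, 0, 0; 0, 1, 0, 0],
    !![0, 0, 1, 1; 0, 0, 0, 1; 1, 0, 0, 1; 1, 1, 1, 0],
    !![0, 1, 0, 0; 1, 0, 1, 1; 0, 1, 0, 1; 0, 1, 1, 0],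
    !![0, 1, 0, 1; 1, 0, 0, 0; 0, 0, 0, 1; 1, 0, 1, 0],
    !![0, 1, 1, 0; 1, 0, 1, 0; 1, 1, 0, 1; 0, 0, 1, 0],
    !![0, 1, 1, 1; 1, 0, 0, 1; 1, 0, 0, 0; 1, 1, 0, 0]]

/-- Congruence by `g` acts on the matrices `K i + K j` as `σ` acts on the pairs `{i, j}`. -/
def Induces (g : Matrix (Fin 4) (Fin 4) (ZMod 2)) (σ : Equiv.Perm (Fin 8)) : Prop :=
  ∀ i j, g * (K i + K j) * gᵀ = K (σ i) + K (σ j)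

lemma Induces.one : Induces 1 1 := by
  intro i j
  simp

lemma Induces.mul {g h : Matrix (Fin 4) (Fin 4) (ZMod 2)} {σ τ : Equiv.Perm (Fin 8)}
    (hg : Induces g σ) (hh : Induces h τ) : Induces (g * h) (σ * τ) := by
  intro i j
  rw [Equiv.Perm.mul_apply, Equiv.Perm.mul_apply, ← hg, ← hh, transpose_mul]
  simp only [Matrix.mul_assoc]

/-- Distinct pairs of labels have distinct sums; only the part needed for uniqueness is stated. -/
lemma eq_or_eq_of_add_eq : ∀ i j a b : Fin 8, i ≠ j → K a + K b = K i + K j → a = i ∨ a = j := by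
  decide +kernel

lemma Induces.unique {g : Matrix (Fin 4) (Fin 4) (ZMod 2)} {σ τ : Equiv.Perm (Fin 8)}
    (hσ : Induces g σ) (hτ : Induces g τ) : σ = τ := by
  ext1 i
  have key : ∀ j, i ≠ j → σ i = τ i ∨ σ i = τ j := fun j hij =>
    eq_or_eq_of_add_eq _ _ _ _ (τ.injective.ne hij) ((hσ i j).symm.trans (hτ i j))
  have hne : ∀ i : Fin 8, i ≠ i + 1 ∧ i ≠ i + 2 ∧ i + 1 ≠ i + 2 := by decide
  obtain ⟨h1, h2, h3⟩ := hne i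
  rcases key _ h1 with h | h
  · exact h
  · rcases key _ h2 with h' | h'
    · exact h'
    · exact absurd (τ.injective (h.symm.trans h')) h3

/-- Row `a`, column `b` lists the values of the involution of `Fin 8` induced by the transvection
`1 + E_ab`. The diagonal entries are placeholders. -/
def transvectionAction : Fin 4 → Fin 4 → Fin 8 → Fin 8 :=
  ![![id, ![5, 6, 4, 7, 2, 0, 1, 3], ![7, 2, 1, 5, 6, 3, 4, 0], ![1, 0, 7, 4, 3, 6, 5, 2]],
    ![![4, 5, 6, 7, 0, 1, 2, 3], id, ![1, 0, 7, 6, 5, 4, 3, 2], ![2, 7, 0, 5, 6, 3, 4, 1]],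
    ![![2, 3, 0, 1, 6, 7, 4, 5], ![1, 0, 3, 2, 7, 6, 5, 4], id, ![6, 5, 4, 7, 2, 1, 0, 3]],
    ![![1, 0, 3, 2, 5, 4, 7, 6], ![3, 2, 1, 0, 6, 7, 4, 5], ![5, 4, 6, 7, 1, 0, 2, 3], id]]

lemma transvectionAction_involutive :
    ∀ a b i, transvectionAction a b (transvectionAction a b i) = i := by
  decide +kernel

lemma transvection_congr : ∀ a b : Fin 4, a ≠ b → ∀ i : Fin 8,
    transvection a b (1 : ZMod 2) * K i * (transvection a b (1 : ZMod 2))ᵀ =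
      K (transvectionAction a b i) + K (transvectionAction a b 0) := by
  decide +kernel

/-- Since `K 0 = 0`, the pairs `{i, 0}` suffice: the terms `K (σ 0)` cancel in characteristic
two. -/
lemma induces_of_congr {g : Matrix (Fin 4) (Fin 4) (ZMod 2)} {σ : Equiv.Perm (Fin 8)}
    (h : ∀ i, g * K i * gᵀ = K (σ i) + K (σ 0)) : Induces g σ := by
  intro i j
  rw [Matrix.mul_add, Matrix.add_mul, h, h, add_add_add_comm, CharTwo.add_self_eq_zero (K (σ 0)),
    add_zero]

lemma zmod_two_eq_one {x : ZMod 2} (hx : x ≠ 0) : x = 1 := by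
  revert x
  decide

lemma exists_induces (g : Matrix (Fin 4) (Fin 4) (ZMod 2)) (hg : g.det ≠ 0) :
    ∃ σ, Induces g σ := by
  refine diagonal_transvection_induction_of_det_ne_zero (fun g => ∃ σ, Induces g σ) g hg ?_ ?_ ?_
  · intro D hD
    -- over `𝔽₂` the only invertible diagonal matrix is the identity
    have hD1 : D = 1 := by
      rw [det_diagonal, Finset.prod_ne_zero_iff] at hD
      funext i
      exact zmod_two_eq_one (hD i (Finset.mem_univ i))
    rw [hD1]
    exact ⟨1, by simpa using Induces.one⟩
  · rintro ⟨a, b, hab, c⟩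
    rw [TransvectionStruct.toMatrix_mk]
    by_cases hc : c = 0
    · exact ⟨1, by simpa [hc] using Induces.one⟩
    · rw [zmod_two_eq_one hc]
      exact ⟨Function.Involutive.toPerm _ (transvectionAction_involutive a b),
        induces_of_congr (transvection_congr a b hab)⟩
  · rintro A B - - ⟨σ, hσ⟩ ⟨τ, hτ⟩
    exact ⟨σ * τ, hσ.mul hτ⟩

/-- The matrices `K i * K 1` have only scalar matrices as common centralizer. -/
lemma eq_scalar_of_commute (g : Matrix (Fin 4) (Fin 4) (ZMod 2))
    (h : ∀ i, g * (K i * K 1) = K i * K 1 * g) : g = g 0 0 • 1 := by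
  have h2 := h 2
  have h3 := h 3
  have h4 := h 4
  have h5 := h 5
  have h6 := h 6
  rw [← Matrix.ext_iff] at h2 h3 h4 h5 h6
  simp [Fin.forall_fin_succ, K, Matrix.mul_apply, Fin.sum_univ_succ] at h2 h3 h4 h5 h6
  ext i j
  fin_cases i <;> fin_cases j <;> simp <;> grind

lemma eq_one_of_induces_one {g : Matrix (Fin 4) (Fin 4) (ZMod 2)} (hg : g.det ≠ 0)
    (h : Induces g 1) : g = 1 := by
  have hK0 : K 0 = 0 := by decide
  have hK1 : K 1 * K 1 = 1 := by decide
  have hfix : ∀ i, g * K i * gᵀ = K i := by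
    intro i
    simpa [hK0] using h i 0
  -- `g` preserves the form `K 1`, so `K 1 * gᵀ * K 1` is its inverse
  have hinv : K 1 * gᵀ * K 1 * g = 1 := by
    apply mul_eq_one_comm.mp
    rw [← Matrix.mul_assoc, ← Matrix.mul_assoc, hfix, hK1]
  have hcomm : ∀ i, g * (K i * K 1) = K i * K 1 * g := by
    intro i
    calc g * (K i * K 1)
        = g * (K i * K 1) * (K 1 * gᵀ * K 1 * g) := by rw [hinv, Matrix.mul_one]
      _ = g * K i * (K 1 * K 1) * gᵀ * K 1 * g := by simp only [Matrix.mul_assoc]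
      _ = K i * K 1 * g := by rw [hK1, Matrix.mul_one, hfix]
  have hs := eq_scalar_of_commute g hcomm
  have h0 : g 0 0 ≠ 0 := by
    intro h0
    rw [h0, zero_smul] at hs
    exact hg (by simp [hs])
  rw [hs, zmod_two_eq_one h0, one_smul]

lemma det_coe_ne_zero (g : GL (Fin 4) (ZMod 2)) : g.1.det ≠ 0 :=
  ((isUnit_iff_isUnit_det _).mp g.isUnit).ne_zero

/-- The action of `GL₄(𝔽₂)` on the eight labels of the Kerdock set. -/
noncomputable def toPerm : GL (Fin 4) (ZMod 2) →* Equiv.Perm (Fin 8) :=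
  MonoidHom.mk' (fun g => (exists_induces g.1 (det_coe_ne_zero g)).choose) fun g h =>
    (exists_induces (g * h).1 (det_coe_ne_zero (g * h))).choose_spec.unique
      ((exists_induces g.1 (det_coe_ne_zero g)).choose_spec.mul
        (exists_induces h.1 (det_coe_ne_zero h)).choose_spec)

lemma induces_toPerm (g : GL (Fin 4) (ZMod 2)) : Induces g.1 (toPerm g) :=
  (exists_induces g.1 (det_coe_ne_zero g)).choose_spec

lemma toPerm_injective : Function.Injective toPerm := by
  rw [injective_iff_map_eq_one]
  intro g hg
  have h := induces_toPerm g
  rw [hg] at h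
  exact Units.ext (eq_one_of_induces_one (det_coe_ne_zero g) h)

lemma card_gl : Nat.card (GL (Fin 4) (ZMod 2)) = 20160 := by
  rw [card_GL_field]
  simp [Fin.prod_univ_succ, ZMod.card]

lemma range_toPerm : toPerm.range = alternatingGroup (Fin 8) := by
  apply Equiv.Perm.eq_alternatingGroup_of_index_eq_two
  have hcard : Nat.card toPerm.range = 20160 := by
    rw [← card_gl]
    exact (Nat.card_congr (MonoidHom.ofInjective toPerm_injective).toEquiv).symm
  have h := toPerm.range.index_mul_card
  have h8 : Nat.factorial 8 = 40320 := by norm_num [Nat.factorial]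
  rw [hcard, Nat.card_perm, Nat.card_fin, h8] at h
  exact Nat.eq_of_mul_eq_mul_right (by norm_num : 0 < 20160) (h.trans (by norm_num))

end GL42

/-- `GL₄(𝔽₂)` (which equals `PSL₄(𝔽₂)`) is isomorphic to the alternating group `A₈`. -/
theorem gl42_iso_A8 :
    Nonempty
      (Matrix.GeneralLinearGroup (Fin 4) (ZMod 2) ≃* alternatingGroup (Fin 8)) :=
  ⟨(MonoidHom.ofInjective GL42.toPerm_injective).trans
    (MulEquiv.subgroupCongr GL42.range_toPerm)⟩
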